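/- arXiv:math/0206211 — 3 statements merged into one kernel-verified Lean document; each statement's English description precedes it below -/
import Mathlib

section
/- Let A be a generic Hermitian n×n matrix over the quaternions ℍ. Then each factor y_k = |A^{1…k−1, 1…k−1}|_{kk} of Δ(A) = y₁ y₂ ⋯ y_n is a real quaternion (equal to its own conjugate), and consequently Δ(A) is real: conj(Δ(A)) = Δ(A). -/
/-!
If `A` is Hermitian, deleting row and column `i` leaves a Hermitian matrix `M`, and an inverse
`B` of `M` is Hermitian: `M B = 1` gives `Bᴴ M = 1`, so `Bᴴ = B` (`isHermitian_of_inv`).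
The quasideterminant `|A|_{ii} = a_{ii} - r B c`, with `c = r*`, is therefore fixed by conjugation
(`star_qdet_self`). Each `y_k` is such a quasideterminant of a principal submatrix of `A`. A
quaternion fixed by conjugation lies in `ℝ`, hence is central, so the conjugate of
`y₁ ⋯ y_n`, which is the product in reverse order, is the same product (`star_list_prod`).
-/

open Matrix

variable {R : Type*} [Ring R]

/-- The submatrix of `A` obtained by deleting row `i` and column `j`,
with rows and columns retaining their original labels. -/
def delSub {I J : Type*} (A : Matrix I J R) (i : I) (j : J) :
    Matrix {p : I // p ≠ i} {q : J // q ≠ j} R :=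
  A.submatrix Subtype.val Subtype.val

/-- A (possibly rectangular-typed) matrix is invertible if it has a two-sided inverse. -/
def HasTwoSidedInv {I J : Type*} [Fintype I] [Fintype J] [DecidableEq I] [DecidableEq J]
    (M : Matrix I J R) : Prop :=
  ∃ B : Matrix J I R, M * B = 1 ∧ B * M = 1

/-- The quasideterminant `|A|_{ij}` is defined iff `A^{ij}` is invertible. -/
def QdetDefined {I J : Type*} [Fintype I] [Fintype J] [DecidableEq I] [DecidableEq J]
    (A : Matrix I J R) (i : I) (j : J) : Prop :=
  HasTwoSidedInv (delSub A i j)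

/- The quasideterminant `|A|_{ij} = a_{ij} - r_i^j (A^{ij})⁻¹ c_j^i` (junk value `0`
if `A^{ij}` is not invertible). -/
open Classical in
noncomputable def qdet {I J : Type*} [Fintype I] [Fintype J] [DecidableEq I] [DecidableEq J]
    (A : Matrix I J R) (i : I) (j : J) : R :=
  if h : QdetDefined A i j then
    A i j - ∑ p : {p : I // p ≠ i}, ∑ q : {q : J // q ≠ j},
      A i q.val * (Exists.choose h) q p * A p.val j
  else 0

/-- A square matrix is generic if all of its square submatrices (including itself)
are invertible. -/
def Generic {n : ℕ} (A : Matrix (Fin n) (Fin n) R) : Prop :=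
  ∀ S T : Finset (Fin n), S.card = T.card →
    HasTwoSidedInv (A.submatrix (Subtype.val : {p : Fin n // p ∈ S} → Fin n)
      (Subtype.val : {q : Fin n // q ∈ T} → Fin n))

/-- `y_k(C) = |C^{1…k−1,1…k−1}|_{kk}`, the `(k,k)`-quasideterminant of the submatrix of `C`
on rows and columns `k, …, m`. -/
noncomputable def ykQdet {R : Type*} [Ring R] {m : ℕ} (C : Matrix (Fin m) (Fin m) R)
    (k : Fin m) : R :=
  qdet (C.submatrix (Subtype.val : {p : Fin m // k ≤ p} → Fin m)
    (Subtype.val : {q : Fin m // k ≤ q} → Fin m)) ⟨k, le_refl k⟩ ⟨k, le_refl k⟩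

/-- The predeterminant `Δ(A) = |A|₁₁ |A^{11}|₂₂ ⋯ a_{nn} = y₁(A) y₂(A) ⋯ y_n(A)`. -/
noncomputable def Delta {R : Type*} [Ring R] {n : ℕ} (A : Matrix (Fin n) (Fin n) R) : R :=
  ((List.finRange n).map (ykQdet A)).prod

open scoped Quaternion

/-- A right inverse of a Hermitian matrix over a noncommutative star ring is Hermitian. -/
theorem isHermitian_of_inv {S K : Type*} [Ring S] [StarRing S] [Fintype K] [DecidableEq K]
    {M B : Matrix K K S} (hM : M.IsHermitian) (h : M * B = 1) :
    B.IsHermitian := by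
  have h' : Bᴴ * M = 1 := by
    rw [← hM.eq, ← conjTranspose_mul, h, conjTranspose_one]
  exact left_inv_eq_right_inv h' h

/-- Diagonal quasideterminants of a Hermitian matrix are self-adjoint. This includes the case where
the quasideterminant is undefined, since its junk value `0` is self-adjoint. -/
theorem star_qdet_self {S I : Type*} [Ring S] [StarRing S] [Fintype I] [DecidableEq I]
    {A : Matrix I I S} (hA : A.IsHermitian) (i : I) : star (qdet A i i) = qdet A i i := by
  unfold qdet
  split_ifs with h
  · have hB : (Exists.choose h).IsHermitian :=
      isHermitian_of_inv (hA.submatrix Subtype.val) (Exists.choose_spec h).1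
    rw [star_sub, hA.apply, star_sum]
    simp_rw [star_sum, star_mul, hA.apply, hB.apply]
    -- Conjugation swaps the roles of the row index `p` and the column index `q`.
    rw [Finset.sum_comm]
    simp_rw [mul_assoc]
  · exact star_zero S

/-- Self-adjoint quaternions are real, hence central, so their products are self-adjoint. -/
theorem star_list_prod (l : List ℍ[ℝ]) (hl : ∀ a ∈ l, star a = a) : star l.prod = l.prod := by
  induction l with
  | nil => simp
  | cons a l ih =>
    rw [List.forall_mem_cons] at hl
    have ha : a = (a.re : ℍ[ℝ]) := Quaternion.star_eq_self.mp hl.1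
    rw [List.prod_cons, star_mul, ih hl.2, hl.1, ha]
    exact (Quaternion.coe_commutes _ _).symm

/-- For a generic Hermitian quaternionic matrix, each factor
`y_k = |A^{1…k−1,1…k−1}|_{kk}` of `Δ(A)` is real (equal to its own conjugate), and
consequently `Δ(A)` is real. -/
theorem Delta_real_of_hermitian {n : ℕ}
    (A : Matrix (Fin n) (Fin n) ℍ[ℝ]) (hA : Generic A) (hherm : A.IsHermitian) :
    (∀ k : Fin n, star (ykQdet A k) = ykQdet A k) ∧ star (Delta A) = Delta A := by
  have hy : ∀ k : Fin n, star (ykQdet A k) = ykQdet A k := fun k =>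
    star_qdet_self (hherm.submatrix Subtype.val) _
  refine ⟨hy, star_list_prod _ fun a ha => ?_⟩
  obtain ⟨k, -, rfl⟩ := List.mem_map.mp ha
  exact hy k
end

section
/- Let A be a generic Hermitian n×n matrix over the quaternions ℍ. Then Δ(A) = M(A), where M(A) is the Moore determinant of A. -/
/-!
Both sides satisfy the same recursion over principal submatrices.

For a finite index set `S` let `X S` be the inverse of the principal submatrix of `A` on `S`. It is
Hermitian, so its diagonal entries are real, and the Schur complement of `S.erase p` in `S`, which
is the diagonal quasideterminant at `p`, equals the real number `(X S p p)⁻¹` (`InvOn.schur`).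
Eliminating two indices in either order gives the same product of such pivots
(`InvOn.pivot_comm`). Hence the product `pivotDet X S` of the pivots is independent of the order of
elimination (`pivotDet_erase`), and `Delta A` is its value on the full index set
(`prod_ykQdet_drop`).

By the block inversion formula, `pivotDet X S * X S k l` is a signed sum over self-avoiding walks
from `k` to `l` in `S`, each weighted by `pivotDet X` of the unvisited indices. This yields, for
`p ∈ S`, an expansion of `pivotDet X S` over all cycles through `p`
(`pivotDet_cycle_expansion`).

For the Moore determinant, write each permutation of `S` as its cycle through the smallest index
`p` times a permutation of the remaining indices (`sum_permsOn`). In the Moore ordering this cycle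
contributes the last factor, starting at `p`, so the Moore determinant obeys the same expansion
(`mooreOn_cycle_expansion`). Induction on `S` gives equality (`mooreOn_eq_pivotDet`).
-/

open Matrix

variable {R : Type*} [Ring R]

open scoped Quaternion

/-- The Moore determinant `M(A) = Σ_σ p(σ) a_{k₁₁k₁₂} ⋯ a_{k_{mj_m}k_{m1}}`: each `σ` is
written as a product of disjoint cycles, each cycle starting at its smallest element, the
cycles arranged by decreasing leading elements; a cycle `(m, σm, …, σ^{l−1}m)` (with `l`
the minimal period of `m`) contributes `a_{m,σm} a_{σm,σ²m} ⋯ a_{σ^{l−1}m,m}`. -/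
noncomputable def mooreDet {n : ℕ} (A : Matrix (Fin n) (Fin n) ℍ[ℝ]) : ℍ[ℝ] :=
  ∑ σ : Equiv.Perm (Fin n),
    (((Equiv.Perm.sign σ : ℤˣ) : ℤ) : ℍ[ℝ]) *
      ((((List.finRange n).filter (fun m => decide (∀ t < n, m ≤ (σ ^ t) m))).reverse).map
        (fun m => ((List.range (Function.minimalPeriod σ m)).map
          (fun t => A ((σ ^ t) m) ((σ ^ (t + 1)) m))).prod)).prod

/-! ### Inverses of principal submatrices -/

/-- `X` restricted to `S × S` is a two-sided inverse of the principal submatrix of `A` on `S`. -/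
def InvOn {n : ℕ} (A : Matrix (Fin n) (Fin n) ℍ[ℝ]) (S : Finset (Fin n))
    (X : Fin n → Fin n → ℍ[ℝ]) : Prop :=
  (∀ p ∈ S, ∀ q ∈ S, ∑ k ∈ S, A p k * X k q = if p = q then 1 else 0) ∧
  (∀ p ∈ S, ∀ q ∈ S, ∑ k ∈ S, X p k * A k q = if p = q then 1 else 0)

section Inverse

variable {n : ℕ} {A : Matrix (Fin n) (Fin n) ℍ[ℝ]} {S : Finset (Fin n)}
  {X Y : Fin n → Fin n → ℍ[ℝ]}

/-- The system `A v = c` on `S` has only the solution `X c`. -/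
lemma InvOn.solve (hX : InvOn A S X) {v c : Fin n → ℍ[ℝ]}
    (h : ∀ j ∈ S, ∑ k ∈ S, A j k * v k = c j) {p : Fin n} (hp : p ∈ S) :
    v p = ∑ j ∈ S, X p j * c j := by
  have h1 : ∑ j ∈ S, X p j * c j = ∑ j ∈ S, ∑ k ∈ S, X p j * A j k * v k := by
    refine Finset.sum_congr rfl fun j hj => ?_
    rw [← h j hj, Finset.mul_sum]
    simp only [mul_assoc]
  rw [h1, Finset.sum_comm]
  have h2 : ∀ k ∈ S, ∑ j ∈ S, X p j * A j k * v k = (if p = k then 1 else 0) * v k := by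
    intro k hk
    rw [← Finset.sum_mul, hX.2 p hp k hk]
  rw [Finset.sum_congr rfl h2]
  simp [hp]

lemma InvOn.unique (hX : InvOn A S X) (hY : InvOn A S Y) {p q : Fin n}
    (hp : p ∈ S) (hq : q ∈ S) : X p q = Y p q := by
  have := hX.solve (v := fun k => Y k q) (fun j hj => hY.1 j hj q hq) hp
  simp [hq] at this
  exact this.symm

lemma InvOn.star (hherm : A.IsHermitian) (hX : InvOn A S X) :
    InvOn A S (fun p q => star (X q p)) := by
  have hA : ∀ i j, A i j = Star.star (A j i) := fun i j => (hherm.apply i j).symm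
  constructor
  · intro p hp q hq
    have := congrArg Star.star (hX.2 q hq p hp)
    simp only [star_sum, star_mul, ← hA] at this
    rw [this]
    by_cases h : p = q <;> simp [h, eq_comm]
  · intro p hp q hq
    have := congrArg Star.star (hX.1 q hq p hp)
    simp only [star_sum, star_mul, ← hA] at this
    rw [this]
    by_cases h : p = q <;> simp [h, eq_comm]

lemma InvOn.hermitian (hherm : A.IsHermitian) (hX : InvOn A S X) {p q : Fin n}
    (hp : p ∈ S) (hq : q ∈ S) : Star.star (X q p) = X p q :=
  (hX.star hherm).unique hX hp hq

lemma InvOn.diag_real (hherm : A.IsHermitian) (hX : InvOn A S X) {p : Fin n}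
    (hp : p ∈ S) : X p p = ((X p p).re : ℍ[ℝ]) :=
  Quaternion.star_eq_self.1 (hX.hermitian hherm hp hp)

/-- If `X p p = 0`, the column `p` of `X` is killed by the invertible submatrix on `S.erase p`,
hence vanishes, contradicting invertibility on `S`. -/
lemma InvOn.diag_ne_zero {p : Fin n} (hp : p ∈ S) (hX : InvOn A S X)
    (hY : InvOn A (S.erase p) Y) : X p p ≠ 0 := by
  intro h0
  have hz : ∀ k ∈ S.erase p, X k p = 0 := by
    intro k hk
    have := hY.solve (v := fun k => X k p) (c := fun _ => 0) (fun j hj => by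
      have h1 := hX.1 j (Finset.mem_of_mem_erase hj) p hp
      rw [← Finset.add_sum_erase _ _ hp, h0, if_neg (Finset.ne_of_mem_erase hj)] at h1
      simpa using h1) hk
    simpa using this
  have h1 := hX.1 p hp p hp
  rw [← Finset.add_sum_erase _ _ hp, h0, Finset.sum_congr rfl
    (fun k hk => by rw [hz k hk])] at h1
  simp at h1

/-- Deleting one index changes the inverse by a rank one correction. -/
lemma InvOn.deflate {p : Fin n} (hp : p ∈ S) (hX : InvOn A S X)
    (hY : InvOn A (S.erase p) Y) {k l : Fin n} (hk : k ∈ S.erase p) (hl : l ∈ S.erase p) :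
    Y k l = X k l - X k p * (X p p)⁻¹ * X p l := by
  have hne := hX.diag_ne_zero hp hY
  have := hY.solve (v := fun k => X k l - X k p * (X p p)⁻¹ * X p l)
    (c := fun j => if j = l then 1 else 0) (fun j hj => by
      have h1 := hX.1 j (Finset.mem_of_mem_erase hj) l (Finset.mem_of_mem_erase hl)
      have h2 := hX.1 j (Finset.mem_of_mem_erase hj) p hp
      rw [← Finset.add_sum_erase _ _ hp] at h1 h2
      rw [if_neg (Finset.ne_of_mem_erase hj)] at h2
      have h3 : ∑ k ∈ S.erase p, A j k * X k p = - (A j p * X p p) := by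
        rw [eq_neg_iff_add_eq_zero, add_comm]; exact h2
      have h4 : ∑ k ∈ S.erase p, A j k * (X k p * (X p p)⁻¹ * X p l)
          = (∑ k ∈ S.erase p, A j k * X k p) * ((X p p)⁻¹ * X p l) := by
        rw [Finset.sum_mul]; simp only [mul_assoc]
      simp only [mul_sub, Finset.sum_sub_distrib]
      rw [h4, h3, ← h1, neg_mul, mul_assoc, mul_inv_cancel_left₀ hne]
      abel) hk
  rw [this]
  simp [hl]

/-- The off-diagonal part of the block inversion formula. -/
lemma InvOn.offdiag {p : Fin n} (hp : p ∈ S) (hX : InvOn A S X)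
    (hY : InvOn A (S.erase p) Y) {q : Fin n} (hq : q ∈ S.erase p) :
    X p q = - (X p p * ∑ k ∈ S.erase p, A p k * Y k q) := by
  have hne := hX.diag_ne_zero hp hY
  have h1 := hX.1 p hp q (Finset.mem_of_mem_erase hq)
  have h2 := hX.1 p hp p hp
  rw [← Finset.add_sum_erase _ _ hp] at h1 h2
  rw [if_neg (Finset.ne_of_mem_erase hq).symm, add_comm] at h1
  rw [if_pos rfl, add_comm] at h2
  have h4 : ∑ k ∈ S.erase p, A p k * (X k p * (X p p)⁻¹ * X p q)
      = (∑ k ∈ S.erase p, A p k * X k p) * ((X p p)⁻¹ * X p q) := by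
    rw [Finset.sum_mul]; simp only [mul_assoc]
  rw [Finset.sum_congr rfl (fun k hk => by rw [hX.deflate hp hY hk hq])]
  simp only [mul_sub, Finset.sum_sub_distrib]
  rw [h4, eq_neg_of_add_eq_zero_left h1, eq_sub_of_add_eq h2, sub_mul, mul_assoc (A p p),
    mul_inv_cancel_left₀ hne, one_mul]
  simp only [mul_sub, mul_neg, mul_inv_cancel_left₀ hne]
  abel

/-- The Schur complement of `S.erase p` is the reciprocal of the diagonal entry of the inverse. -/
lemma InvOn.schur {p : Fin n} (hp : p ∈ S) (hX : InvOn A S X)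
    (hY : InvOn A (S.erase p) Y) :
    X p p * (A p p - ∑ k ∈ S.erase p, ∑ l ∈ S.erase p, A p k * Y k l * A l p) = 1 := by
  have h1 := hX.2 p hp p hp
  rw [← Finset.add_sum_erase _ _ hp, if_pos rfl] at h1
  rw [mul_sub, Finset.sum_comm, Finset.mul_sum, ← h1, sub_eq_add_neg, ← Finset.sum_neg_distrib]
  congr 1
  refine Finset.sum_congr rfl fun l hl => ?_
  rw [hX.offdiag hp hY hl, ← Finset.sum_mul]
  simp [mul_assoc]

/-- Eliminating two indices in either order gives the same product of pivots: both sides equal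
`X p p * X q q - |X q p|²`, since `X` is Hermitian. -/
lemma InvOn.pivot_comm (hherm : A.IsHermitian) {Z : Fin n → Fin n → ℍ[ℝ]} {p q : Fin n}
    (hp : p ∈ S) (hq : q ∈ S) (hpq : p ≠ q)
    (hX : InvOn A S X) (hY : InvOn A (S.erase p) Y) (hZ : InvOn A (S.erase q) Z) :
    (X p p).re * (Y q q).re = (X q q).re * (Z p p).re := by
  have hp0 := hX.diag_ne_zero hp hY
  have hq0 := hX.diag_ne_zero hq hZ
  have hY1 := hX.deflate hp hY (Finset.mem_erase.2 ⟨hpq.symm, hq⟩)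
    (Finset.mem_erase.2 ⟨hpq.symm, hq⟩)
  have hZ1 := hX.deflate hq hZ (Finset.mem_erase.2 ⟨hpq, hp⟩) (Finset.mem_erase.2 ⟨hpq, hp⟩)
  have hpr := hX.diag_real hherm hp
  have hqr := hX.diag_real hherm hq
  set a := (X p p).re
  set b := (X q q).re
  have ha : a ≠ 0 := by rintro h; rw [hpr, h] at hp0; simp at hp0
  have hb : b ≠ 0 := by rintro h; rw [hqr, h] at hq0; simp at hq0
  rw [← hX.hermitian hherm hq hp, hpr, hqr, ← Quaternion.coe_inv, mul_assoc,
    Quaternion.coe_commutes, ← mul_assoc, Quaternion.star_mul_self] at hY1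
  rw [← hX.hermitian hherm hq hp, hpr, hqr, ← Quaternion.coe_inv, mul_assoc,
    Quaternion.coe_commutes, ← mul_assoc, Quaternion.self_mul_star] at hZ1
  rw [hY1, hZ1, ← Quaternion.coe_mul, ← Quaternion.coe_mul, ← Quaternion.coe_sub,
    ← Quaternion.coe_sub, Quaternion.re_coe, Quaternion.re_coe]
  field_simp

end Inverse

/-! ### Products of pivots and their cycle expansion -/

/-- The product of the (real) pivots obtained by eliminating the indices of `S` in increasing
order, where `X S` is the inverse of the principal submatrix on `S`. The pivot of the index `p`
in `S` is the reciprocal of the diagonal entry `X S p p`. -/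
noncomputable def pivotDet {n : ℕ} (X : Finset (Fin n) → Fin n → Fin n → ℍ[ℝ])
    (S : Finset (Fin n)) : ℝ :=
  if h : S.Nonempty then
    ((X S (S.min' h) (S.min' h)).re)⁻¹ * pivotDet X (S.erase (S.min' h))
  else 1
termination_by S.card
decreasing_by exact Finset.card_erase_lt_of_mem (S.min'_mem h)

/-- The product of the entries of `A` along the walk from `j` through `l` to `p`. -/
noncomputable def walkProd {n : ℕ} (A : Matrix (Fin n) (Fin n) ℍ[ℝ]) (p : Fin n) :
    Fin n → List (Fin n) → ℍ[ℝ]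
  | j, [] => A j p
  | j, k :: l => A j k * walkProd A p k l

/-- The finite set of lists without repetition whose entries lie in `S`. -/
def nodupLists {n : ℕ} (S : Finset (Fin n)) : Finset (List (Fin n)) :=
  (Finset.univ : Finset {l : List (Fin n) // l.Nodup}).map
    ⟨Subtype.val, Subtype.val_injective⟩ |>.filter (fun l => ∀ x ∈ l, x ∈ S)

lemma mem_nodupLists {n : ℕ} {S : Finset (Fin n)} {l : List (Fin n)} :
    l ∈ nodupLists S ↔ l.Nodup ∧ ∀ x ∈ l, x ∈ S := by
  simp [nodupLists]

/-- Summation over repetition-free lists by splitting off the head. -/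
lemma sum_nodupLists {n : ℕ} (S : Finset (Fin n)) (f : List (Fin n) → ℍ[ℝ]) :
    ∑ l ∈ nodupLists S, f l =
      f [] + ∑ k ∈ S, ∑ l ∈ nodupLists (S.erase k), f (k :: l) := by
  have h : nodupLists S = insert [] ((S.sigma fun k => nodupLists (S.erase k)).image
      (fun x => x.1 :: x.2)) := by
    ext l
    cases l with
    | nil => simp [mem_nodupLists]
    | cons a l =>
      simp only [mem_nodupLists, List.nodup_cons, List.mem_cons, Finset.mem_insert,
        Finset.mem_image, Finset.mem_sigma, Finset.mem_erase, Sigma.exists, List.cons.injEq,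
        reduceCtorEq, false_or]
      constructor
      · rintro ⟨⟨h1, h2⟩, h3⟩
        exact ⟨a, l, ⟨h3 a (Or.inl rfl), h2, fun x hx =>
          ⟨fun h => h1 (h ▸ hx), h3 x (Or.inr hx)⟩⟩, rfl, rfl⟩
      · rintro ⟨a, l, ⟨h1, h2, h3⟩, rfl, rfl⟩
        refine ⟨⟨fun h => (h3 _ h).1 rfl, h2⟩, ?_⟩
        rintro x (rfl | hx)
        · exact h1
        · exact (h3 x hx).2
  rw [h, Finset.sum_insert (by simp), Finset.sum_image, Finset.sum_sigma]
  rintro ⟨a, l⟩ - ⟨b, m⟩ - h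
  simp only [List.cons.injEq] at h
  obtain ⟨rfl, rfl⟩ := h
  rfl

section Expansion

variable {n : ℕ} {A : Matrix (Fin n) (Fin n) ℍ[ℝ]} {X : Finset (Fin n) → Fin n → Fin n → ℍ[ℝ]}

lemma diag_re_ne_zero (hherm : A.IsHermitian) (hX : ∀ S, InvOn A S (X S)) {S : Finset (Fin n)}
    {p : Fin n} (hp : p ∈ S) : (X S p p).re ≠ 0 := by
  intro h
  have := (hX S).diag_ne_zero hp (hX _)
  rw [(hX S).diag_real hherm hp, h] at this
  simp at this

/-- The product of pivots does not depend on the order of elimination. -/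
lemma pivotDet_erase (hherm : A.IsHermitian) (hX : ∀ S, InvOn A S (X S)) (S : Finset (Fin n)) :
    ∀ p ∈ S, pivotDet X S * (X S p p).re = pivotDet X (S.erase p) := by
  induction S using Finset.strongInduction with
  | H S ih =>
  intro p hp
  have hne : S.Nonempty := ⟨p, hp⟩
  have hm := S.min'_mem hne
  rw [pivotDet, dif_pos hne]
  set m := S.min' hne with hmdef
  have hm0 := diag_re_ne_zero hherm hX hm
  have hp0 := diag_re_ne_zero hherm hX hp
  by_cases hpm : p = m
  · rw [hpm]; field_simp
  · have hp' : p ∈ S.erase m := Finset.mem_erase.2 ⟨hpm, hp⟩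
    have hm' : m ∈ S.erase p := Finset.mem_erase.2 ⟨Ne.symm hpm, hm⟩
    have h1 := ih _ (Finset.erase_ssubset hm) p hp'
    have h2 := ih _ (Finset.erase_ssubset hp) m hm'
    have h3 := (hX S).pivot_comm hherm hp hm hpm (hX _) (hX _)
    have hp0' := diag_re_ne_zero hherm hX hp'
    have hm0' := diag_re_ne_zero hherm hX hm'
    rw [Finset.erase_right_comm] at h1
    rw [← h2] at h1
    rw [eq_div_of_mul_eq hp0' h1]
    field_simp
    linear_combination pivotDet X (S.erase p) * h3

/-- Closed form of the signed sum over self-avoiding walks from `j` through `D` to `p`, weighted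
by the product of pivots on the unvisited part of `D`. The induction splits off the first vertex
`k` of the walk and uses the block inversion formula `InvOn.offdiag` for row `k` of `X D`. -/
lemma walk_expansion (hherm : A.IsHermitian) (hX : ∀ S, InvOn A S (X S)) (p : Fin n)
    (D : Finset (Fin n)) : ∀ j,
    ∑ l ∈ nodupLists D, (-1) ^ l.length * (pivotDet X (D \ l.toFinset) : ℍ[ℝ]) * walkProd A p j l
      = (pivotDet X D : ℍ[ℝ]) *
        (A j p - ∑ k ∈ D, ∑ l ∈ D, A j k * X D k l * A l p) := by
  induction D using Finset.strongInduction with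
  | H D ih =>
  intro j
  have key : ∀ k ∈ D, ∑ l ∈ nodupLists (D.erase k), (-1) ^ (k :: l).length *
      (pivotDet X (D \ (k :: l).toFinset) : ℍ[ℝ]) * walkProd A p j (k :: l)
      = - ((pivotDet X D : ℍ[ℝ]) * ∑ l ∈ D, A j k * X D k l * A l p) := by
    intro k hk
    have h1 : ∀ l ∈ nodupLists (D.erase k), (-1) ^ (k :: l).length *
      (pivotDet X (D \ (k :: l).toFinset) : ℍ[ℝ]) * walkProd A p j (k :: l)
      = - (A j k * ((-1) ^ l.length * (pivotDet X (D.erase k \ l.toFinset) : ℍ[ℝ])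
          * walkProd A p k l)) := by
      intro l _
      have h2 : D \ (k :: l).toFinset = D.erase k \ l.toFinset := by
        ext x; simp; tauto
      rw [h2, walkProd]
      have h3 : (-1 : ℍ[ℝ]) ^ l.length * (pivotDet X (D.erase k \ l.toFinset) : ℍ[ℝ])
          = (((-1) ^ l.length * pivotDet X (D.erase k \ l.toFinset) : ℝ) : ℍ[ℝ]) := by
        push_cast; rfl
      rw [List.length_cons, pow_succ, mul_neg_one, neg_mul, neg_mul, h3, ← mul_assoc,
        ← mul_assoc, Quaternion.coe_commutes]
    rw [Finset.sum_congr rfl h1, Finset.sum_neg_distrib, ← Finset.mul_sum,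
      ih _ (Finset.erase_ssubset hk) k]
    congr 1
    rw [← Finset.add_sum_erase _ _ hk]
    have h4 : (pivotDet X (D.erase k) : ℍ[ℝ]) = (pivotDet X D : ℍ[ℝ]) * X D k k := by
      rw [(hX D).diag_real hherm hk, ← Quaternion.coe_mul, pivotDet_erase hherm hX D k hk]
    have h5 : ∑ l ∈ D.erase k, A j k * X D k l * A l p = - (A j k * (X D k k *
        ∑ k' ∈ D.erase k, ∑ l ∈ D.erase k, A k k' * X (D.erase k) k' l * A l p)) := by
      rw [Finset.sum_comm, Finset.mul_sum, Finset.mul_sum, ← Finset.sum_neg_distrib]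
      refine Finset.sum_congr rfl fun l hl => ?_
      rw [(hX D).offdiag hk (hX _) hl, ← Finset.sum_mul]
      simp [mul_assoc]
    rw [h5, h4, mul_assoc, ← mul_assoc (A j k), ← Quaternion.coe_commutes]
    simp only [mul_assoc, mul_add, mul_neg, sub_eq_add_neg]
  rw [sum_nodupLists, Finset.sum_congr rfl key, Finset.sum_neg_distrib, ← Finset.mul_sum]
  simp only [List.length_nil, pow_zero, one_mul, List.toFinset_nil, Finset.sdiff_empty, walkProd,
    sub_eq_add_neg, mul_add, mul_neg]

/-- Expansion of the product of pivots on `S` along the cycles through `p`. -/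
lemma pivotDet_cycle_expansion (hherm : A.IsHermitian) (hX : ∀ S, InvOn A S (X S))
    {S : Finset (Fin n)} {p : Fin n} (hp : p ∈ S) :
    (pivotDet X S : ℍ[ℝ]) = ∑ l ∈ nodupLists (S.erase p), (-1) ^ l.length *
      (pivotDet X (S.erase p \ l.toFinset) : ℍ[ℝ]) * walkProd A p p l := by
  rw [walk_expansion hherm hX, ← pivotDet_erase hherm hX S p hp, Quaternion.coe_mul, mul_assoc,
    ← (hX S).diag_real hherm hp, (hX S).schur hp (hX _), mul_one]

end Expansion

/-! ### Moore determinants of principal submatrices -/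

section Perms

variable {n : ℕ}

/-- The product of the entries of `A` along the cycle of `σ` through `m`, starting at `m`. -/
noncomputable def cycProd (A : Matrix (Fin n) (Fin n) ℍ[ℝ]) (σ : Equiv.Perm (Fin n))
    (m : Fin n) : ℍ[ℝ] :=
  ((List.range (Function.minimalPeriod σ m)).map
    (fun t => A ((σ ^ t) m) ((σ ^ (t + 1)) m))).prod

/-- The elements of `S` that are smallest in their `σ`-orbit, in increasing order. -/
def cycReps (σ : Equiv.Perm (Fin n)) (S : Finset (Fin n)) : List (Fin n) :=
  (List.finRange n).filter (fun m => decide (m ∈ S ∧ ∀ t < n, m ≤ (σ ^ t) m))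

/-- The permutations that move only elements of `S`. -/
def permsOn (S : Finset (Fin n)) : Finset (Equiv.Perm (Fin n)) :=
  Finset.univ.filter (fun σ => ∀ x ∉ S, σ x = x)

lemma mem_permsOn {S : Finset (Fin n)} {σ : Equiv.Perm (Fin n)} :
    σ ∈ permsOn S ↔ ∀ x ∉ S, σ x = x := by simp [permsOn]

/-- The Moore determinant of the principal submatrix of `A` on `S`. -/
noncomputable def mooreOn (A : Matrix (Fin n) (Fin n) ℍ[ℝ]) (S : Finset (Fin n)) : ℍ[ℝ] :=
  ∑ σ ∈ permsOn S, (((Equiv.Perm.sign σ : ℤˣ) : ℤ) : ℍ[ℝ]) *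
    ((cycReps σ S).reverse.map (cycProd A σ)).prod

lemma mooreDet_eq_mooreOn (A : Matrix (Fin n) (Fin n) ℍ[ℝ]) :
    mooreDet A = mooreOn A Finset.univ := by
  simp only [mooreDet, mooreOn, permsOn, cycReps, Finset.mem_univ, not_true_eq_false,
    IsEmpty.forall_iff, implies_true, Finset.filter_true, true_and]
  rfl

lemma sign_formPerm_cons (p : Fin n) (l : List (Fin n)) (h : (p :: l).Nodup) :
    Equiv.Perm.sign (p :: l).formPerm = (-1) ^ l.length := by
  induction l generalizing p with
  | nil => simp
  | cons a l ih =>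
    have hpa : p ≠ a := by
      rintro rfl; simp at h
    rw [List.formPerm_cons_cons, Equiv.Perm.sign_mul, ih a (List.nodup_cons.1 h).2,
      Equiv.Perm.sign_swap hpa, List.length_cons, pow_succ']

section

variable {p : Fin n} {l : List (Fin n)} {τ : Equiv.Perm (Fin n)}

lemma formPerm_mul_commute (hτ : ∀ x ∈ p :: l, τ x = x) : Commute (p :: l).formPerm τ := by
  refine Equiv.Perm.Disjoint.commute fun x => ?_
  by_cases hx : x ∈ p :: l
  · exact Or.inr (hτ x hx)
  · exact Or.inl (List.formPerm_apply_of_notMem hx)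

lemma pow_apply_of_mem (h : (p :: l).Nodup) (hτ : ∀ x ∈ p :: l, τ x = x) (t i : ℕ)
    (hi : i < (p :: l).length) :
    (((p :: l).formPerm * τ) ^ t) (p :: l)[i] =
      (p :: l)[(i + t) % (p :: l).length]'(Nat.mod_lt _ (by simp)) := by
  rw [(formPerm_mul_commute hτ).mul_pow, Equiv.Perm.mul_apply,
    Equiv.Perm.pow_apply_eq_self_of_apply_eq_self (hτ _ (List.getElem_mem _)),
    List.formPerm_pow_apply_getElem _ h]

lemma pow_apply_of_notMem (hτ : ∀ x ∈ p :: l, τ x = x) (t : ℕ) {m : Fin n}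
    (hm : m ∉ p :: l) : (((p :: l).formPerm * τ) ^ t) m = (τ ^ t) m := by
  rw [(formPerm_mul_commute hτ).mul_pow, ((formPerm_mul_commute hτ).pow_pow t t).eq,
    Equiv.Perm.mul_apply,
    Equiv.Perm.pow_apply_eq_self_of_apply_eq_self (List.formPerm_apply_of_notMem hm)]

lemma minimalPeriod_of_notMem (hτ : ∀ x ∈ p :: l, τ x = x) {m : Fin n}
    (hm : m ∉ p :: l) : Function.minimalPeriod ((p :: l).formPerm * τ) m =
      Function.minimalPeriod τ m := by
  rw [Function.minimalPeriod_eq_minimalPeriod_iff]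
  intro t
  simp only [Function.IsPeriodicPt, Function.IsFixedPt, Equiv.Perm.iterate_eq_pow,
    pow_apply_of_notMem hτ t hm]

lemma minimalPeriod_head (h : (p :: l).Nodup) (hτ : ∀ x ∈ p :: l, τ x = x) :
    Function.minimalPeriod ((p :: l).formPerm * τ) p = l.length + 1 := by
  have h0 := fun t => pow_apply_of_mem h hτ t 0 (by simp)
  simp only [List.getElem_cons_zero, zero_add] at h0
  apply le_antisymm
  · apply Function.IsPeriodicPt.minimalPeriod_le (by omega)
    simp only [Function.IsPeriodicPt, Function.IsFixedPt, Equiv.Perm.iterate_eq_pow, h0]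
    simp
  · by_contra hlt
    push Not at hlt
    have hper : Function.IsPeriodicPt ((p :: l).formPerm * τ)
      (Function.minimalPeriod ((p :: l).formPerm * τ) p) p :=
      Function.isPeriodicPt_minimalPeriod _ _
    have hpos : 0 < Function.minimalPeriod ((p :: l).formPerm * τ) p :=
      Function.minimalPeriod_pos_of_mem_periodicPts
        ⟨l.length + 1, by omega, by
          simp only [Function.IsPeriodicPt, Function.IsFixedPt, Equiv.Perm.iterate_eq_pow, h0]
          simp⟩
    simp only [Function.IsPeriodicPt, Function.IsFixedPt, Equiv.Perm.iterate_eq_pow, h0] at hper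
    have h1 : (p :: l)[Function.minimalPeriod ((p :: l).formPerm * τ) p %
      (p :: l).length]'(Nat.mod_lt _ (by simp)) = (p :: l)[0] := hper
    rw [h.getElem_inj_iff, Nat.mod_eq_of_lt (by simpa using hlt)] at h1
    omega

/-- The walk product along consecutive values of a sequence `g`. -/
lemma walkProd_eq_prod_range (A : Matrix (Fin n) (Fin n) ℍ[ℝ]) (k : ℕ) :
    ∀ g : ℕ → Fin n, walkProd A (g (k + 1)) (g 0) ((List.range k).map fun t => g (t + 1)) =
      ((List.range (k + 1)).map fun t => A (g t) (g (t + 1))).prod := by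
  induction k with
  | zero => intro g; simp [walkProd]
  | succ k ih =>
    intro g
    rw [List.range_succ_eq_map, List.map_cons, walkProd, List.range_succ_eq_map (n := k + 1),
      List.map_cons, List.prod_cons]
    have := ih (fun t => g (t + 1))
    simp only [List.map_map, Function.comp_def, Nat.succ_eq_add_one] at this ⊢
    rw [this]

/-- The cycle of `(p :: l).formPerm * τ` through `p` is recovered from its iterates. -/
lemma tail_eq_map_pow (h : (p :: l).Nodup) (hτ : ∀ x ∈ p :: l, τ x = x) :
    (List.range l.length).map (fun t => (((p :: l).formPerm * τ) ^ (t + 1)) p) = l := by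
  have h0 := fun t => pow_apply_of_mem h hτ t 0 (by simp)
  simp only [List.getElem_cons_zero, zero_add] at h0
  refine List.ext_getElem (by simp) fun i h1 h2 => ?_
  simp only [List.getElem_map, List.getElem_range, h0]
  simp [Nat.mod_eq_of_lt (show i + 1 < l.length + 1 by omega)]

lemma cycProd_head (A : Matrix (Fin n) (Fin n) ℍ[ℝ]) (h : (p :: l).Nodup)
    (hτ : ∀ x ∈ p :: l, τ x = x) :
    cycProd A ((p :: l).formPerm * τ) p = walkProd A p p l := by
  rw [cycProd, minimalPeriod_head h hτ]
  have h1 := walkProd_eq_prod_range A l.length (fun t => (((p :: l).formPerm * τ) ^ t) p)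
  rw [← h1, tail_eq_map_pow h hτ]
  have h0 := pow_apply_of_mem h hτ (l.length + 1) 0 (by simp)
  simp only [List.getElem_cons_zero, zero_add, List.length_cons, Nat.mod_self] at h0
  rw [h0]
  rfl

lemma cycProd_of_notMem (A : Matrix (Fin n) (Fin n) ℍ[ℝ]) (hτ : ∀ x ∈ p :: l, τ x = x)
    {m : Fin n} (hm : m ∉ p :: l) :
    cycProd A ((p :: l).formPerm * τ) m = cycProd A τ m := by
  simp only [cycProd, minimalPeriod_of_notMem hτ hm, pow_apply_of_notMem hτ _ hm]

/-- If `p` is the smallest element of `S`, adjoining the cycle `p :: l` to `τ` adds exactly the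
representative `p`: any other entry of `l` reaches the smaller element `p` within `n` steps. -/
lemma cycReps_formPerm_mul {S : Finset (Fin n)} (hp : p ∈ S) (hmin : ∀ x ∈ S, p ≤ x)
    (h : (p :: l).Nodup) (hl : ∀ x ∈ l, x ∈ S) (hτ : ∀ x ∈ p :: l, τ x = x) :
    cycReps ((p :: l).formPerm * τ) S = p :: cycReps τ (S.erase p \ l.toFinset) := by
  have hS : ∀ x ∈ p :: l, x ∈ S := by
    intro x hx
    rcases List.mem_cons.1 hx with rfl | hx
    exacts [hp, hl x hx]
  have hlen : (p :: l).length ≤ n := by simpa using h.length_le_card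
  have hs : ∀ σ (T : Finset (Fin n)), (cycReps σ T).Pairwise (· < ·) := fun σ T =>
    (List.pairwise_lt_finRange n).filter _
  have hs' : (p :: cycReps τ (S.erase p \ l.toFinset)).Pairwise (· < ·) := by
    refine List.pairwise_cons.2 ⟨fun x hx => ?_, hs _ _⟩
    simp only [cycReps, List.mem_filter, Finset.mem_sdiff, Finset.mem_erase,
      decide_eq_true_eq] at hx
    exact lt_of_le_of_ne (hmin x hx.2.1.1.2) (Ne.symm hx.2.1.1.1)
  refine List.Perm.eq_of_pairwise (fun a b _ _ h1 h2 => absurd h1 (not_lt.2 h2.le))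
    (hs _ _) hs' ?_
  rw [List.perm_ext_iff_of_nodup ((hs _ _).imp ne_of_lt) (hs'.imp ne_of_lt)]
  intro m
  simp only [cycReps, List.mem_filter, List.mem_finRange, true_and, decide_eq_true_eq,
    List.mem_cons, Finset.mem_sdiff, Finset.mem_erase, List.mem_toFinset]
  by_cases hm : m ∈ p :: l
  · obtain ⟨i, hi, rfl⟩ := List.getElem_of_mem hm
    constructor
    · rintro ⟨-, h2⟩
      left
      by_contra hne
      have hi0 : i ≠ 0 := by
        rintro rfl; exact hne rfl
      have h3 := h2 ((p :: l).length - i) (by omega)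
      rw [pow_apply_of_mem h hτ] at h3
      have h4 : (i + ((p :: l).length - i)) % (p :: l).length = 0 := by
        rw [Nat.add_sub_cancel' hi.le, Nat.mod_self]
      simp only [h4, List.getElem_cons_zero] at h3
      exact hne (le_antisymm h3 (hmin _ (hS _ hm)))
    · rintro (h1 | h1)
      · refine ⟨hS _ hm, fun t _ => ?_⟩
        rw [pow_apply_of_mem h hτ, h1]
        exact hmin _ (hS _ (List.getElem_mem _))
      · rcases List.mem_cons.1 hm with h2 | h2
        exacts [absurd h2 h1.1.1.1, absurd h2 h1.1.2]
  · have h1 : m ≠ p ∧ m ∉ l := by simpa using hm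
    simp [pow_apply_of_notMem hτ _ hm, h1]

end

/-- Splitting a permutation of `S` into its cycle through `p` and the rest. -/
lemma sum_permsOn {S : Finset (Fin n)} {p : Fin n} (hp : p ∈ S)
    (f : Equiv.Perm (Fin n) → ℍ[ℝ]) :
    ∑ σ ∈ permsOn S, f σ = ∑ l ∈ nodupLists (S.erase p),
      ∑ τ ∈ permsOn (S.erase p \ l.toFinset), f ((p :: l).formPerm * τ) := by
  rw [Finset.sum_sigma']
  have hgood : ∀ x ∈ (nodupLists (S.erase p)).sigma
      (fun l => permsOn (S.erase p \ l.toFinset)),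
      (p :: x.1).Nodup ∧ (∀ y ∈ p :: x.1, x.2 y = y) ∧ (∀ y ∈ p :: x.1, y ∈ S) ∧
      ∀ y ∉ S, x.2 y = y := by
    rintro ⟨l, τ⟩ hx
    simp only [Finset.mem_sigma, mem_nodupLists, mem_permsOn, Finset.mem_sdiff,
      Finset.mem_erase, List.mem_toFinset] at hx
    obtain ⟨⟨h1, h2⟩, h3⟩ := hx
    refine ⟨List.nodup_cons.2 ⟨fun h => (h2 p h).1 rfl, h1⟩, ?_, ?_, ?_⟩
    · intro y hy
      apply h3
      rcases List.mem_cons.1 hy with rfl | hy <;> tauto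
    · intro y hy
      rcases List.mem_cons.1 hy with rfl | hy
      exacts [hp, (h2 y hy).2]
    · intro y hy
      exact h3 y (by tauto)
  symm
  refine Finset.sum_bij (fun x _ => (p :: x.1).formPerm * x.2) ?_ ?_ ?_ (fun _ _ => rfl)
  · intro x hx
    obtain ⟨-, -, h3, h4⟩ := hgood x hx
    rw [mem_permsOn]
    intro y hy
    rw [Equiv.Perm.mul_apply, h4 y hy, List.formPerm_apply_of_notMem fun h => hy (h3 y h)]
  · rintro ⟨l, τ⟩ hx ⟨l', τ'⟩ hx' he
    obtain ⟨h1, h2, -⟩ := hgood _ hx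
    obtain ⟨h1', h2', -⟩ := hgood _ hx'
    dsimp only at *
    have hlen : l.length = l'.length := by
      have a := minimalPeriod_head h1 h2
      rw [he, minimalPeriod_head h1' h2'] at a
      omega
    have hl : l = l' := by
      rw [← tail_eq_map_pow h1 h2, he, hlen, tail_eq_map_pow h1' h2']
    subst hl
    rw [mul_left_cancel he]
  · intro σ hσ
    rw [mem_permsOn] at hσ
    obtain ⟨l, h1, h2, h3⟩ : ∃ l : List (Fin n), (p :: l).Nodup ∧ (∀ y ∈ l, y ∈ S) ∧
        ∀ y ∈ p :: l, (p :: l).formPerm y = σ y := by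
      by_cases hfix : σ p = p
      · exact ⟨[], by simp, by simp, by simp [hfix]⟩
      · have hsup : p ∈ σ.support := by simpa using hfix
        have h0 : (Equiv.Perm.toList σ p)[0]? = some p := by
          rw [List.getElem?_eq_getElem
              (Equiv.Perm.length_toList_pos_of_mem_support σ p hsup),
            Equiv.Perm.toList_getElem_zero σ p hsup]
        have hnd := Equiv.Perm.nodup_toList σ p
        have hfp := Equiv.Perm.formPerm_toList σ p
        have hmem := fun y => Equiv.Perm.mem_toList_iff (p := σ) (x := p) (y := y)
        have hlp := Equiv.Perm.length_toList_pos_of_mem_support σ p hsup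
        revert h0 hnd hfp hmem hlp
        cases hL : Equiv.Perm.toList σ p with
        | nil => intro _ _ _ _ h; simp at h
        | cons a l =>
          intro h0 hnd hfp hmem _
          obtain rfl : a = p := by simpa using h0
          refine ⟨l, hnd, fun y hy => ?_, fun y hy => ?_⟩
          · by_contra hyS
            have := ((hmem y).1 (List.mem_cons_of_mem _ hy)).1
            exact hfix (this.apply_eq_self_iff.2 (hσ y hyS))
          · rw [hfp, Equiv.Perm.SameCycle.cycleOf_apply ((hmem y).1 hy).1]
    refine ⟨⟨l, (p :: l).formPerm⁻¹ * σ⟩, ?_, by simp⟩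
    simp only [Finset.mem_sigma, mem_nodupLists, mem_permsOn, Finset.mem_sdiff,
      Finset.mem_erase, List.mem_toFinset]
    have h4 := List.nodup_cons.1 h1
    refine ⟨⟨h4.2, fun x hx => ⟨fun h => h4.1 (h ▸ hx), h2 x hx⟩⟩, fun x hx => ?_⟩
    rw [Equiv.Perm.mul_apply, Equiv.Perm.inv_eq_iff_eq]
    by_cases hxl : x ∈ p :: l
    · exact (h3 x hxl).symm
    · rw [List.formPerm_apply_of_notMem hxl]
      have h5 : x ≠ p ∧ x ∉ l := by simpa using hxl
      exact hσ x (by tauto)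

/-- Expansion of the Moore determinant on `S` along the cycles through the smallest index. -/
lemma mooreOn_cycle_expansion (A : Matrix (Fin n) (Fin n) ℍ[ℝ]) {S : Finset (Fin n)} {p : Fin n}
    (hp : p ∈ S) (hmin : ∀ x ∈ S, p ≤ x) :
    mooreOn A S = ∑ l ∈ nodupLists (S.erase p), (-1) ^ l.length *
      mooreOn A (S.erase p \ l.toFinset) * walkProd A p p l := by
  rw [mooreOn, sum_permsOn hp]
  refine Finset.sum_congr rfl fun l hl => ?_
  rw [mooreOn, Finset.mul_sum, Finset.sum_mul]
  refine Finset.sum_congr rfl fun τ hτ => ?_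
  rw [mem_nodupLists] at hl
  simp only [mem_permsOn, Finset.mem_sdiff, Finset.mem_erase, List.mem_toFinset] at hτ hl
  have h1 : (p :: l).Nodup := List.nodup_cons.2 ⟨fun h => (hl.2 p h).1 rfl, hl.1⟩
  have h2 : ∀ x ∈ p :: l, τ x = x := by
    intro x hx
    apply hτ
    rcases List.mem_cons.1 hx with rfl | hx <;> tauto
  rw [cycReps_formPerm_mul hp hmin h1 (fun x hx => (hl.2 x hx).2) h2, List.reverse_cons,
    List.map_append, List.prod_append, Equiv.Perm.sign_mul, sign_formPerm_cons p l h1]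
  simp only [List.map_cons, List.map_nil, List.prod_cons, List.prod_nil, mul_one,
    cycProd_head A h1 h2]
  have h3 : (cycReps τ (S.erase p \ l.toFinset)).reverse.map
      (cycProd A ((p :: l).formPerm * τ)) =
      (cycReps τ (S.erase p \ l.toFinset)).reverse.map (cycProd A τ) := by
    refine List.map_congr_left fun m hm => cycProd_of_notMem A h2 ?_
    simp only [cycReps, List.mem_reverse, List.mem_filter, decide_eq_true_eq, Finset.mem_sdiff,
      Finset.mem_erase, List.mem_toFinset] at hm
    simp only [List.mem_cons, not_or]
    exact ⟨hm.2.1.1.1, hm.2.1.2⟩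
  rw [h3]
  push_cast
  simp only [mul_assoc]

end Perms

/-- Both sides satisfy the same expansion along the cycles through the smallest index. -/
lemma mooreOn_eq_pivotDet {n : ℕ} {A : Matrix (Fin n) (Fin n) ℍ[ℝ]}
    {X : Finset (Fin n) → Fin n → Fin n → ℍ[ℝ]} (hherm : A.IsHermitian)
    (hX : ∀ S, InvOn A S (X S)) (S : Finset (Fin n)) :
    mooreOn A S = (pivotDet X S : ℍ[ℝ]) := by
  induction S using Finset.strongInduction with
  | H S ih =>
  rcases S.eq_empty_or_nonempty with rfl | hne
  · have h1 : permsOn (∅ : Finset (Fin n)) = {1} := by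
      ext σ
      simp [mem_permsOn, Equiv.ext_iff]
    have h2 : cycReps (1 : Equiv.Perm (Fin n)) ∅ = [] := by simp [cycReps]
    rw [pivotDet, mooreOn, h1]
    simp [h2]
  · have hm := S.min'_mem hne
    rw [mooreOn_cycle_expansion A hm (fun x hx => S.min'_le x hx),
      pivotDet_cycle_expansion hherm hX hm]
    refine Finset.sum_congr rfl fun l _ => ?_
    rw [ih _ (lt_of_le_of_lt Finset.sdiff_subset (Finset.erase_ssubset hm))]

/-! ### Identification of `Delta` with the product of pivots -/

/-- Transport of an inverse along an injection `f` of an index type, extended by zero off the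
range of `f`. -/
lemma exists_invOn {n : ℕ} {A : Matrix (Fin n) (Fin n) ℍ[ℝ]} {J : Type*} [Fintype J]
    [DecidableEq J] (f : J → Fin n) (hf : Function.Injective f) (B : Matrix J J ℍ[ℝ])
    (h1 : A.submatrix f f * B = 1) (h2 : B * A.submatrix f f = 1) :
    ∃ Y, InvOn A (Finset.univ.image f) Y ∧ ∀ i j, Y (f i) (f j) = B i j := by
  have hY : ∀ i j, Function.extend f (fun i => Function.extend f (B i) 0 (f j)) 0 (f i)
      = B i j := fun i j => by rw [hf.extend_apply, hf.extend_apply]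
  refine ⟨fun x y => Function.extend f (fun i => Function.extend f (B i) 0 y) 0 x,
    ⟨?_, ?_⟩, hY⟩
  all_goals
    simp only [Finset.mem_image, Finset.mem_univ, true_and]
    rintro _ ⟨i, rfl⟩ _ ⟨j, rfl⟩
    rw [Finset.sum_image fun _ _ _ _ h => hf h]
    simp only [hY, hf.eq_iff]
  · simpa [Matrix.mul_apply, Matrix.one_apply] using congrFun (congrFun h1 i) j
  · simpa [Matrix.mul_apply, Matrix.one_apply] using congrFun (congrFun h2 i) j

lemma Generic.exists_inverses {n : ℕ} {A : Matrix (Fin n) (Fin n) ℍ[ℝ]} (hA : Generic A) :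
    ∃ X : Finset (Fin n) → Fin n → Fin n → ℍ[ℝ], ∀ S, InvOn A S (X S) := by
  have : ∀ S : Finset (Fin n), ∃ Y, InvOn A S Y := by
    intro S
    obtain ⟨B, h1, h2⟩ := hA S S rfl
    obtain ⟨Y, hY, -⟩ := exists_invOn _ Subtype.val_injective B h1 h2
    refine ⟨Y, ?_⟩
    convert hY
    ext x; simp
  choose X hX using this
  exact ⟨X, hX⟩

/-- The index set `{k, …, n - 1}` of the trailing principal submatrix. -/
def tailSet (n k : ℕ) : Finset (Fin n) := Finset.univ.filter fun i => k ≤ i.val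

lemma tailSet_erase {n : ℕ} (k : Fin n) : (tailSet n k).erase k = tailSet n (k + 1) := by
  ext i
  simp only [tailSet, Finset.mem_erase, Finset.mem_filter, Finset.mem_univ, true_and, ne_eq,
    Fin.ext_iff]
  omega

/-- `ykQdet A k` is the pivot of `k` in the submatrix on `{k, …, n - 1}`, that is, the reciprocal
of the corresponding diagonal entry of the inverse. -/
lemma diag_mul_ykQdet {n : ℕ} {A : Matrix (Fin n) (Fin n) ℍ[ℝ]}
    {X : Finset (Fin n) → Fin n → Fin n → ℍ[ℝ]}
    (hX : ∀ S, InvOn A S (X S)) (k : Fin n) :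
    X (tailSet n k) k k * ykQdet A k = 1 := by
  have hk : k ∈ tailSet n k := by simp [tailSet]
  let f : {p : {p : Fin n // k ≤ p} // p ≠ ⟨k, le_refl k⟩} → Fin n := fun p => p.val.val
  have hf : Function.Injective f := Subtype.val_injective.comp Subtype.val_injective
  have himg : Finset.univ.image f = (tailSet n k).erase k := by
    ext i
    simp only [f, tailSet, Finset.mem_image, Finset.mem_univ, true_and, Finset.mem_erase,
      Finset.mem_filter]
    constructor
    · rintro ⟨⟨⟨j, h1⟩, h2⟩, rfl⟩
      exact ⟨fun h => h2 (Subtype.ext h), h1⟩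
    · rintro ⟨h1, h2⟩
      exact ⟨⟨⟨i, h2⟩, fun h => h1 (congrArg Subtype.val h)⟩, rfl⟩
  have hdef : QdetDefined (A.submatrix (Subtype.val : {p : Fin n // k ≤ p} → Fin n)
      (Subtype.val : {q : Fin n // k ≤ q} → Fin n)) ⟨k, le_refl k⟩ ⟨k, le_refl k⟩ := by
    have h0 := hX ((tailSet n k).erase k)
    rw [← himg] at h0
    refine ⟨Matrix.of fun i j => X (Finset.univ.image f) (f i) (f j), ?_, ?_⟩
    · ext1 i j
      have := h0.1 (f i) (by simp) (f j) (by simp)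
      rw [Finset.sum_image fun _ _ _ _ h => hf h] at this
      rw [Matrix.mul_apply, Matrix.one_apply]
      simp only [hf.eq_iff] at this
      exact this
    · ext1 i j
      have := h0.2 (f i) (by simp) (f j) (by simp)
      rw [Finset.sum_image fun _ _ _ _ h => hf h] at this
      rw [Matrix.mul_apply, Matrix.one_apply]
      simp only [hf.eq_iff] at this
      exact this
  rw [ykQdet, qdet, dif_pos hdef]
  obtain ⟨Y, hY, hYB⟩ := exists_invOn (A := A) f hf (Exists.choose hdef)
    (Exists.choose_spec hdef).1 (Exists.choose_spec hdef).2
  have hs := (hX (tailSet n k)).schur hk (himg ▸ hY)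
  rw [← himg, Finset.sum_image fun _ _ _ _ h => hf h] at hs
  simp only [Finset.sum_image (fun _ _ _ _ h => hf h : Set.InjOn f _), hYB] at hs
  rw [Finset.sum_comm]
  exact hs

lemma prod_ykQdet_drop {n : ℕ} {A : Matrix (Fin n) (Fin n) ℍ[ℝ]}
    {X : Finset (Fin n) → Fin n → Fin n → ℍ[ℝ]} (hherm : A.IsHermitian)
    (hX : ∀ S, InvOn A S (X S)) (d : ℕ) : ∀ k, k + d = n →
    (((List.finRange n).drop k).map (ykQdet A)).prod = (pivotDet X (tailSet n k) : ℍ[ℝ]) := by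
  induction d with
  | zero =>
    rintro k rfl
    have h : tailSet (k + 0) k = ∅ := by
      ext i; have := i.2; simp [tailSet]
    rw [h, pivotDet, List.drop_of_length_le (by simp)]
    simp
  | succ d ih =>
    intro k hk
    have hkn : k < n := by omega
    have hmem : (⟨k, hkn⟩ : Fin n) ∈ tailSet n k := by simp [tailSet]
    rw [List.drop_eq_getElem_cons (by simpa using hkn), List.map_cons, List.prod_cons,
      ih (k + 1) (by omega), ← tailSet_erase ⟨k, hkn⟩, ← pivotDet_erase hherm hX _ _ hmem,
      ← Quaternion.coe_commutes, Quaternion.coe_mul, mul_assoc,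
      ← (hX _).diag_real hherm hmem]
    have := diag_mul_ykQdet hX (⟨k, hkn⟩ : Fin n)
    simp only [List.getElem_finRange]
    exact (congrArg _ this).trans (mul_one _)

/-- For a generic Hermitian quaternionic matrix, `Δ(A) = M(A)`. -/
theorem Delta_eq_moore {n : ℕ}
    (A : Matrix (Fin n) (Fin n) ℍ[ℝ]) (hA : Generic A) (hherm : A.IsHermitian) :
    Delta A = mooreDet A := by
  obtain ⟨X, hX⟩ := hA.exists_inverses
  have h1 := prod_ykQdet_drop hherm hX n 0 (by omega)
  have h2 : tailSet n 0 = Finset.univ := by simp [tailSet]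
  rw [List.drop_zero, h2] at h1
  rw [Delta, h1, mooreDet_eq_mooreOn, mooreOn_eq_pivotDet hherm hX]
end

section
/- Let A and B be generic n×n matrices over the quaternions ℍ such that the product A B is also generic. Then ν(A B) = ν(A) ν(B), where ν(C) = Π_{k=1}^n ν(y_k(C)) is the quaternionic norm of a generic matrix C. -/
/-!
The norm `ν(C)` of a generic matrix is its Study determinant, the determinant of the complex
matrix of size `2m` obtained from a ring embedding `ℍ → M₂(ℂ)` applied to each entry. The Study
determinant is multiplicative because the passage from `M_m(ℍ)` to `M_{2m}(ℂ)` is a ring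
homomorphism, and this gives `ν(A B) = ν(A) ν(B)`.

The identification rests on the Schur complement. The `(i,i)`-quasideterminant is the entry left in
row `i` after a unipotent row operation clears the rest of that row, so the Study determinant of
`M` is that of `M^{ii}` times `det (quatToComplex |M|_{ii}) = normSq |M|_{ii}`
(`studyDet_eq_mul_normSq_qdet`). Applying this to the trailing principal submatrices, whose
invertibility is part of genericity, and telescoping gives `studyDet_eq_nuMat`.
-/

open Matrix

variable {R : Type*} [Ring R]

open scoped Quaternion

/-- The norm `ν(C) = Π_k ν(y_k(C)) ∈ ℝ` of a square quaternionic matrix. -/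
noncomputable def nuMat {m : ℕ} (C : Matrix (Fin m) (Fin m) ℍ[ℝ]) : ℝ :=
  ∏ k : Fin m, Quaternion.normSq (ykQdet C k)

/-! ### The Study determinant -/

/-- The standard ring embedding of the quaternions into the complex `2 × 2` matrices,
`a + b i + c j + d k ↦ !![a + b I, c + d I; -c + d I, a - b I]`. -/
noncomputable def quatToComplex : ℍ[ℝ] →+* Matrix (Fin 2) (Fin 2) ℂ where
  toFun h := !![⟨h.re, h.imI⟩, ⟨h.imJ, h.imK⟩; ⟨-h.imJ, h.imK⟩, ⟨h.re, -h.imI⟩]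
  map_one' := by
    ext i j; fin_cases i <;> fin_cases j <;> simp [Complex.ext_iff]
  map_zero' := by
    ext i j; fin_cases i <;> fin_cases j <;> simp [Complex.ext_iff]
  map_add' x y := by
    ext i j; fin_cases i <;> fin_cases j <;> simp [Complex.ext_iff] <;> ring
  map_mul' x y := by
    ext i j
    fin_cases i <;> fin_cases j <;> simp [Complex.ext_iff, Matrix.mul_apply] <;>
      constructor <;> ring

theorem det_quatToComplex (h : ℍ[ℝ]) :
    (quatToComplex h).det = ((Quaternion.normSq h : ℝ) : ℂ) := by
  simp only [quatToComplex, RingHom.coe_mk, MonoidHom.coe_mk, OneHom.coe_mk, det_fin_two_of,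
    Quaternion.normSq_def']
  apply Complex.ext <;> simp [sq] <;> ring

/-- The Study determinant of a quaternionic matrix: the determinant of the complex matrix of
twice the size obtained by replacing each entry by its `2 × 2` complex block. -/
noncomputable def studyDet {I : Type*} [Fintype I] [DecidableEq I] (M : Matrix I I ℍ[ℝ]) : ℂ :=
  (Matrix.compRingEquiv I (Fin 2) ℂ (quatToComplex.mapMatrix M)).det

section StudyDet

variable {I J : Type*} [Fintype I] [DecidableEq I] [Fintype J] [DecidableEq J]

theorem studyDet_mul (M N : Matrix I I ℍ[ℝ]) : studyDet (M * N) = studyDet M * studyDet N := by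
  simp only [studyDet, map_mul, det_mul]

theorem studyDet_one : studyDet (1 : Matrix I I ℍ[ℝ]) = 1 := by
  simp only [studyDet, map_one, det_one]

theorem studyDet_submatrix_equiv (e : J ≃ I) (M : Matrix I I ℍ[ℝ]) :
    studyDet (M.submatrix e e) = studyDet M := by
  unfold studyDet
  rw [← det_submatrix_equiv_self (e.prodCongr (Equiv.refl (Fin 2)))]
  rfl

/-- The diagonal blocks of the complex matrix attached to `M`, for the splitting of the index set
into `i` and its complement. -/
theorem studyDet_blocks (M : Matrix I I ℍ[ℝ]) (i : I) :
    (toSquareBlockProp (Matrix.compRingEquiv I (Fin 2) ℂ (quatToComplex.mapMatrix M))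
        (fun x => x.1 ≠ i)).det *
      (toSquareBlockProp (Matrix.compRingEquiv I (Fin 2) ℂ (quatToComplex.mapMatrix M))
        (fun x => ¬ x.1 ≠ i)).det =
    studyDet (delSub M i i) * ((Quaternion.normSq (M i i) : ℝ) : ℂ) := by
  congr 1
  · let e : {p : I // p ≠ i} × Fin 2 ≃ {x : I × Fin 2 // x.1 ≠ i} :=
      { toFun := fun x => ⟨(x.1.1, x.2), x.1.2⟩
        invFun := fun x => (⟨x.1.1, x.2⟩, x.1.2)
        left_inv := fun _ => rfl
        right_inv := fun _ => rfl }
    rw [← det_submatrix_equiv_self e]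
    rfl
  · let e : Fin 2 ≃ {x : I × Fin 2 // ¬ x.1 ≠ i} :=
      { toFun := fun x => ⟨(i, x), by simp⟩
        invFun := fun x => x.1.2
        left_inv := fun _ => rfl
        right_inv := fun x => by
          obtain ⟨⟨a, b⟩, h⟩ := x
          simp only [ne_eq, not_not] at h
          subst h
          rfl }
    rw [← det_submatrix_equiv_self e, ← det_quatToComplex]
    rfl

theorem studyDet_of_row_eq_zero (M : Matrix I I ℍ[ℝ]) (i : I) (h : ∀ q, q ≠ i → M i q = 0) :
    studyDet M = studyDet (delSub M i i) * ((Quaternion.normSq (M i i) : ℝ) : ℂ) := by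
  rw [← studyDet_blocks, studyDet]
  apply twoBlockTriangular_det
  rintro ⟨a, b⟩ ha ⟨c, d⟩ hc
  simp only [ne_eq, not_not] at ha hc
  subst ha
  simp [h c hc]

theorem studyDet_of_col_eq_zero (M : Matrix I I ℍ[ℝ]) (i : I) (h : ∀ p, p ≠ i → M p i = 0) :
    studyDet M = studyDet (delSub M i i) * ((Quaternion.normSq (M i i) : ℝ) : ℂ) := by
  rw [← studyDet_blocks, studyDet]
  apply twoBlockTriangular_det'
  rintro ⟨a, b⟩ ha ⟨c, d⟩ hc
  simp only [ne_eq, not_not] at ha hc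
  subst hc
  simp [h a ha]

/-! ### Quasideterminants as Schur complements -/

/-- One step of block elimination: a unipotent row operation turns row `i` of `M` into a row whose
only nonzero entry is the quasideterminant `|M|_{ii}`, at position `i`. -/
theorem studyDet_eq_mul_normSq_qdet (M : Matrix I I ℍ[ℝ]) (i : I) (hd : QdetDefined M i i) :
    studyDet M = studyDet (delSub M i i) * ((Quaternion.normSq (qdet M i i) : ℝ) : ℂ) := by
  have hX := hd.choose_spec
  have hq : qdet M i i = M i i - ∑ p : {p : I // p ≠ i}, ∑ q : {q : I // q ≠ i},
      M i q.val * hd.choose q p * M p.val i := by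
    unfold qdet
    rw [dif_pos hd]
  generalize hd.choose = X at hX hq
  let L : Matrix I I ℍ[ℝ] := fun p q =>
    if p = i then
      if hq : q = i then 1 else -∑ s : {s : I // s ≠ i}, M i s * X s ⟨q, hq⟩
    else (1 : Matrix I I ℍ[ℝ]) p q
  have hLii : L i i = 1 := by simp [L]
  have hLiq (q : {q : I // q ≠ i}) : L i q = -∑ s : {s : I // s ≠ i}, M i s * X s q := by
    simp [L, q.2]
  have hLp (p q : I) (hp : p ≠ i) : L p q = (1 : Matrix I I ℍ[ℝ]) p q := by simp [L, hp]
  have hL : studyDet L = 1 := by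
    rw [studyDet_of_col_eq_zero L i fun p hp => by rw [hLp p i hp, one_apply_ne hp], hLii]
    have : delSub L i i = 1 := by
      ext1 p q
      simp only [delSub, submatrix_apply, hLp p q p.2, one_apply, Subtype.ext_iff]
    simp [this, studyDet_one]
  have hLMp (p q : I) (hp : p ≠ i) : (L * M) p q = M p q := by
    simp [mul_apply, hLp p _ hp, one_apply]
  have hLMi (q : I) : (L * M) i q =
      M i q - ∑ r : {r : I // r ≠ i}, ∑ s : {s : I // s ≠ i}, M i s * X s r * M r q := by
    rw [mul_apply, Fintype.sum_eq_add_sum_subtype_ne _ i, hLii, one_mul, sub_eq_add_neg,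
      ← Finset.sum_neg_distrib]
    congr 1
    refine Finset.sum_congr rfl fun r _ => ?_
    rw [hLiq, neg_mul, Finset.sum_mul]
  have hrow (q : I) (hqi : q ≠ i) : (L * M) i q = 0 := by
    have hs (s : {s : I // s ≠ i}) :
        ∑ r : {r : I // r ≠ i}, X s r * M r q =
          (1 : Matrix {s : I // s ≠ i} {s : I // s ≠ i} ℍ[ℝ]) s ⟨q, hqi⟩ := by
      rw [← hX.2, mul_apply]
      rfl
    rw [hLMi, Finset.sum_comm]
    simp_rw [mul_assoc, ← Finset.mul_sum, hs]
    simp [one_apply]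
  have hdel : delSub (L * M) i i = delSub M i i := by
    ext1 p q
    exact hLMp p q p.2
  rw [← one_mul (studyDet M), ← hL, ← studyDet_mul, studyDet_of_row_eq_zero _ i hrow, hdel, hLMi,
    ← hq]

end StudyDet

/-! ### The norm of a generic matrix is its Study determinant -/

theorem HasTwoSidedInv.submatrix_equiv {I J I' J' : Type*} [Fintype I] [Fintype J]
    [DecidableEq I] [DecidableEq J] [Fintype I'] [Fintype J'] [DecidableEq I'] [DecidableEq J']
    {M : Matrix I J R} (h : HasTwoSidedInv M) (e : I' ≃ I) (f : J' ≃ J) :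
    HasTwoSidedInv (M.submatrix e f) := by
  obtain ⟨B, h1, h2⟩ := h
  refine ⟨B.submatrix f e, ?_, ?_⟩
  · rw [submatrix_mul_equiv, h1, submatrix_one_equiv]
  · rw [submatrix_mul_equiv, h2, submatrix_one_equiv]

/-- The Study determinant of the trailing principal submatrix on the indices `≥ j`
(`j = m` gives the empty matrix). -/
noncomputable def trailDet {m : ℕ} (C : Matrix (Fin m) (Fin m) ℍ[ℝ]) (j : ℕ) : ℂ :=
  studyDet (C.submatrix (Subtype.val : {p : Fin m // j ≤ p.val} → Fin m)
    (Subtype.val : {p : Fin m // j ≤ p.val} → Fin m))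

theorem trailDet_step {m : ℕ} {C : Matrix (Fin m) (Fin m) ℍ[ℝ]} (hC : Generic C) (k : Fin m) :
    trailDet C k = trailDet C (k + 1) * ((Quaternion.normSq (ykQdet C k) : ℝ) : ℂ) := by
  let e : {p : {p : Fin m // k ≤ p} // p ≠ ⟨k, le_refl k⟩} ≃ {p : Fin m // k.val + 1 ≤ p.val} :=
    { toFun := fun p => ⟨p.1.1, by
        have h1 := p.1.2
        have h2 := p.2
        simp only [ne_eq, Subtype.ext_iff, Fin.ext_iff, Fin.le_def] at h1 h2
        omega⟩
      invFun := fun p => ⟨⟨p.1, by have := p.2; rw [Fin.le_def]; omega⟩, by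
        have := p.2
        simp only [ne_eq, Subtype.ext_iff, Fin.ext_iff]
        omega⟩
      left_inv := fun _ => rfl
      right_inv := fun _ => rfl }
  let S : Finset (Fin m) := Finset.univ.filter fun p => k.val + 1 ≤ p.val
  let f : {p : Fin m // k.val + 1 ≤ p.val} ≃ {p : Fin m // p ∈ S} :=
    Equiv.subtypeEquivRight fun p => by simp [S]
  have hd := (hC S S rfl).submatrix_equiv (e.trans f) (e.trans f)
  have h := studyDet_eq_mul_normSq_qdet
    (C.submatrix (Subtype.val : {p : Fin m // k ≤ p} → Fin m)
      (Subtype.val : {p : Fin m // k ≤ p} → Fin m)) ⟨k, le_refl k⟩ hd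
  have h' := studyDet_submatrix_equiv e
    (C.submatrix (Subtype.val : {p : Fin m // k.val + 1 ≤ p.val} → Fin m)
      (Subtype.val : {p : Fin m // k.val + 1 ≤ p.val} → Fin m))
  unfold trailDet
  rw [← h']
  exact h

theorem studyDet_eq_nuMat {m : ℕ} {C : Matrix (Fin m) (Fin m) ℍ[ℝ]} (hC : Generic C) :
    studyDet C = (nuMat C : ℂ) := by
  let g : ℕ → ℂ := fun j =>
    if h : j < m then ((Quaternion.normSq (ykQdet C ⟨j, h⟩) : ℝ) : ℂ) else 1
  have key (j : ℕ) (hj : j ≤ m) : trailDet C 0 = trailDet C j * ∏ k ∈ Finset.range j, g k := by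
    induction j with
    | zero => simp
    | succ j ih =>
      rw [ih (by omega), trailDet_step hC ⟨j, hj⟩, Finset.prod_range_succ,
        show g j = _ from dif_pos hj]
      ring
  have h0 : trailDet C 0 = studyDet C :=
    studyDet_submatrix_equiv (Equiv.subtypeUnivEquiv fun _ => Nat.zero_le _) C
  have hm : trailDet C m = 1 := by
    have : IsEmpty {p : Fin m // m ≤ p.val} := ⟨fun p => absurd p.1.2 (by have := p.2; omega)⟩
    exact det_isEmpty
  rw [← h0, key m le_rfl, hm, one_mul, ← Fin.prod_univ_eq_prod_range, nuMat, Complex.ofReal_prod]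
  exact Finset.prod_congr rfl fun k _ => dif_pos k.2

/-- Multiplicativity of the quaternionic norm: `ν(A B) = ν(A) ν(B)` for generic `A`, `B`
with `A B` generic. -/
theorem nu_mul {n : ℕ} (A B : Matrix (Fin n) (Fin n) ℍ[ℝ])
    (hA : Generic A) (hB : Generic B) (hAB : Generic (A * B)) :
    nuMat (A * B) = nuMat A * nuMat B := by
  apply Complex.ofReal_injective
  rw [Complex.ofReal_mul, ← studyDet_eq_nuMat hAB, ← studyDet_eq_nuMat hA, ← studyDet_eq_nuMat hB,
    studyDet_mul]
end
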